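/- (Height-preserving contraction in G) If the sequent A,A,Γ⇒Δ has a derivation in G of height at most n, then A,Γ⇒Δ has a derivation in G of height at most n; and if Γ⇒Δ,A,A has a derivation in G of height at most n, then Γ⇒Δ,A has a derivation in G of height at most n. -/

import Mathlib

/-- Terms: variables or individual constants (no function symbols). -/
inductive Tm where
  | var : ℕ → Tm
  | const : ℕ → Tm
deriving DecidableEq

/-- First-order formulas over a language with denumerably many predicates,
a logical identity predicate, ⊥, ⊤, ∧, ∨, →, ∀, ∃. -/
inductive Fm where
  | rel : ℕ → List Tm → Fm
  | eq : Tm → Tm → Fm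
  | bot : Fm
  | top : Fm
  | and : Fm → Fm → Fm
  | or : Fm → Fm → Fm
  | imp : Fm → Fm → Fm
  | all : ℕ → Fm → Fm
  | ex : ℕ → Fm → Fm
deriving DecidableEq

def Fm.isAtom : Fm → Prop
  | .rel _ _ => True
  | .eq _ _ => True
  | .bot => True
  | .top => True
  | _ => False

/-- Ter(A): the free variables and individual constants of A, as terms. -/
def Fm.ter : Fm → Finset Tm
  | .rel _ ts => ts.toFinset
  | .eq a b => {a, b}
  | .bot => ∅
  | .top => ∅
  | .and A B => A.ter ∪ B.ter
  | .or A B => A.ter ∪ B.ter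
  | .imp A B => A.ter ∪ B.ter
  | .all x A => A.ter.erase (Tm.var x)
  | .ex x A => A.ter.erase (Tm.var x)

/-- Rel(A): the non-logical predicate symbols of A (identity, ⊥, ⊤ are logical). -/
def Fm.rels : Fm → Finset ℕ
  | .rel r _ => {r}
  | .eq _ _ => ∅
  | .bot => ∅
  | .top => ∅
  | .and A B => A.rels ∪ B.rels
  | .or A B => A.rels ∪ B.rels
  | .imp A B => A.rels ∪ B.rels
  | .all _ A => A.rels
  | .ex _ A => A.rels

def Tm.consts : Tm → Finset ℕ
  | .var _ => ∅
  | .const c => {c}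

/-- The individual constants occurring in A. -/
def Fm.consts : Fm → Finset ℕ
  | .rel _ ts => ts.foldr (fun t s => t.consts ∪ s) ∅
  | .eq a b => a.consts ∪ b.consts
  | .bot => ∅
  | .top => ∅
  | .and A B => A.consts ∪ B.consts
  | .or A B => A.consts ∪ B.consts
  | .imp A B => A.consts ∪ B.consts
  | .all _ A => A.consts
  | .ex _ A => A.consts

/-- L(A) = Ter(A) ∪ Rel(A). -/
def Fm.lang (A : Fm) : Finset (Tm ⊕ ℕ) :=
  A.ter.image Sum.inl ∪ A.rels.image Sum.inr

/-- Ter of a multiset of formulas. -/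
def terM (Γ : Multiset Fm) : Finset Tm := (Γ.map Fm.ter).sup

/-- L of a multiset of formulas. -/
def langM (Γ : Multiset Fm) : Finset (Tm ⊕ ℕ) := (Γ.map Fm.lang).sup

/-- s[t/u]: substitute the term t for the term u (a variable or a constant) in s. -/
def Tm.subst (s u t : Tm) : Tm := if s = u then t else s

/-- A[t/u]: substitute the term t for the term u in A (bound occurrences
of a variable u are not replaced). -/
def Fm.subst : Fm → Tm → Tm → Fm
  | .rel r ts, u, t => .rel r (ts.map (fun s => s.subst u t))
  | .eq a b, u, t => .eq (a.subst u t) (b.subst u t)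
  | .bot, _, _ => .bot
  | .top, _, _ => .top
  | .and A B, u, t => .and (A.subst u t) (B.subst u t)
  | .or A B, u, t => .or (A.subst u t) (B.subst u t)
  | .imp A B, u, t => .imp (A.subst u t) (B.subst u t)
  | .all x A, u, t => if u = Tm.var x then .all x A else .all x (A.subst u t)
  | .ex x A, u, t => if u = Tm.var x then .ex x A else .ex x (A.subst u t)

/-- t is free for u in A (no free occurrence of u is in the scope of a
quantifier binding the variable t, if t is a variable). -/
def Fm.freeFor (t u : Tm) : Fm → Prop
  | .and A B => A.freeFor t u ∧ B.freeFor t u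
  | .or A B => A.freeFor t u ∧ B.freeFor t u
  | .imp A B => A.freeFor t u ∧ B.freeFor t u
  | .all x A => u ∉ (Fm.all x A).ter ∨ (t ≠ Tm.var x ∧ A.freeFor t u)
  | .ex x A => u ∉ (Fm.ex x A).ter ∨ (t ≠ Tm.var x ∧ A.freeFor t u)
  | _ => True

/-- Simultaneous substitution of terms for variables (used on atoms). -/
def Tm.applyσ (σ : ℕ → Tm) : Tm → Tm
  | .var x => σ x
  | .const c => .const c

def Fm.applyσ (σ : ℕ → Tm) : Fm → Fm
  | .rel r ts => .rel r (ts.map (Tm.applyσ σ))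
  | .eq a b => .eq (a.applyσ σ) (b.applyσ σ)
  | .bot => .bot
  | .top => .top
  | .and A B => .and (A.applyσ σ) (B.applyσ σ)
  | .or A B => .or (A.applyσ σ) (B.applyσ σ)
  | .imp A B => .imp (A.applyσ σ) (B.applyσ σ)
  | .all x A => .all x (A.applyσ σ)
  | .ex x A => .ex x (A.applyσ σ)

/-- A geometric rule, given by its principal atoms P₁,…,Pₙ (with free
variables x̄) and, for each of its m ≥ 1 premises, an atom Qᵢ together with
its eigenvariable yᵢ. It corresponds to the geometric axiom
∀x̄(P₁∧…∧Pₙ → ∃y₁Q₁ ∨ … ∨ ∃yₘQₘ). -/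
structure GeomRule where
  Ps : List Fm
  QYs : List (Fm × ℕ)
  QYs_ne : QYs ≠ []
  atomP : ∀ P ∈ Ps, P.isAtom
  atomQ : ∀ q ∈ QYs, q.1.isAtom

/-- Rel of a list of formulas. -/
def relsL (L : List Fm) : Finset ℕ := L.foldr (fun A s => A.rels ∪ s) ∅

/-- A singular geometric rule: no individual constants occur in it, and (⋆):
at most one non-logical predicate occurs among the Qᵢ's and Pⱼ's, and every
non-logical predicate of the Qᵢ's occurs among the Pⱼ's. -/
def GeomRule.Singular (R : GeomRule) : Prop :=
  (∀ P ∈ R.Ps, P.consts = ∅) ∧ (∀ q ∈ R.QYs, q.1.consts = ∅) ∧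
  (relsL R.Ps ∪ relsL (R.QYs.map Prod.fst)).card ≤ 1 ∧
  relsL (R.QYs.map Prod.fst) ⊆ relsL R.Ps

/-- The instantiated principal atoms P₁[σ],…,Pₙ[σ] of a geometric rule. -/
def GeomRule.inst (R : GeomRule) (σ : ℕ → Tm) : Multiset Fm :=
  ((R.Ps.map (Fm.applyσ σ) : List Fm) : Multiset Fm)

/-- `DerG Rules n Γ Δ`: the sequent Γ⇒Δ has a derivation of height at most n
in the calculus G3c extended with the geometric rules in `Rules`
(the plain calculus G is `DerG ∅`). -/
inductive DerG (Rules : Set GeomRule) : ℕ → Multiset Fm → Multiset Fm → Prop where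
  | ax {n : ℕ} {P : Fm} {Γ Δ : Multiset Fm} (h : P.isAtom) :
      DerG Rules n (P ::ₘ Γ) (P ::ₘ Δ)
  | botL {n : ℕ} {Γ Δ : Multiset Fm} : DerG Rules n (Fm.bot ::ₘ Γ) Δ
  | topR {n : ℕ} {Γ Δ : Multiset Fm} : DerG Rules n Γ (Fm.top ::ₘ Δ)
  | andL {n : ℕ} {A B : Fm} {Γ Δ : Multiset Fm} :
      DerG Rules n (A ::ₘ B ::ₘ Γ) Δ → DerG Rules (n + 1) (Fm.and A B ::ₘ Γ) Δ
  | andR {n : ℕ} {A B : Fm} {Γ Δ : Multiset Fm} :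
      DerG Rules n Γ (A ::ₘ Δ) → DerG Rules n Γ (B ::ₘ Δ) →
      DerG Rules (n + 1) Γ (Fm.and A B ::ₘ Δ)
  | orL {n : ℕ} {A B : Fm} {Γ Δ : Multiset Fm} :
      DerG Rules n (A ::ₘ Γ) Δ → DerG Rules n (B ::ₘ Γ) Δ →
      DerG Rules (n + 1) (Fm.or A B ::ₘ Γ) Δ
  | orR {n : ℕ} {A B : Fm} {Γ Δ : Multiset Fm} :
      DerG Rules n Γ (A ::ₘ B ::ₘ Δ) → DerG Rules (n + 1) Γ (Fm.or A B ::ₘ Δ)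
  | impL {n : ℕ} {A B : Fm} {Γ Δ : Multiset Fm} :
      DerG Rules n Γ (A ::ₘ Δ) → DerG Rules n (B ::ₘ Γ) Δ →
      DerG Rules (n + 1) (Fm.imp A B ::ₘ Γ) Δ
  | impR {n : ℕ} {A B : Fm} {Γ Δ : Multiset Fm} :
      DerG Rules n (A ::ₘ Γ) (B ::ₘ Δ) → DerG Rules (n + 1) Γ (Fm.imp A B ::ₘ Δ)
  | allL {n : ℕ} {x : ℕ} {A : Fm} {t : Tm} {Γ Δ : Multiset Fm}
      (hfree : A.freeFor t (Tm.var x)) :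
      DerG Rules n (A.subst (Tm.var x) t ::ₘ Fm.all x A ::ₘ Γ) Δ →
      DerG Rules (n + 1) (Fm.all x A ::ₘ Γ) Δ
  | allR {n : ℕ} {x y : ℕ} {A : Fm} {Γ Δ : Multiset Fm}
      (hfree : A.freeFor (Tm.var y) (Tm.var x))
      (hy : Tm.var y ∉ terM Γ ∪ terM Δ ∪ (Fm.all x A).ter) :
      DerG Rules n Γ (A.subst (Tm.var x) (Tm.var y) ::ₘ Δ) →
      DerG Rules (n + 1) Γ (Fm.all x A ::ₘ Δ)
  | exL {n : ℕ} {x y : ℕ} {A : Fm} {Γ Δ : Multiset Fm}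
      (hfree : A.freeFor (Tm.var y) (Tm.var x))
      (hy : Tm.var y ∉ terM Γ ∪ terM Δ ∪ (Fm.ex x A).ter) :
      DerG Rules n (A.subst (Tm.var x) (Tm.var y) ::ₘ Γ) Δ →
      DerG Rules (n + 1) (Fm.ex x A ::ₘ Γ) Δ
  | exR {n : ℕ} {x : ℕ} {A : Fm} {t : Tm} {Γ Δ : Multiset Fm}
      (hfree : A.freeFor t (Tm.var x)) :
      DerG Rules n Γ (Fm.ex x A ::ₘ A.subst (Tm.var x) t ::ₘ Δ) →
      DerG Rules (n + 1) Γ (Fm.ex x A ::ₘ Δ)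
  | geom {n : ℕ} {R : GeomRule} {σ : ℕ → Tm} {Γ Δ : Multiset Fm} (hR : R ∈ Rules)
      (hfresh : ∀ q ∈ R.QYs, ∃ z : ℕ, σ q.2 = Tm.var z ∧
          Tm.var z ∉ terM (R.inst σ + Γ) ∪ terM Δ)
      (hprem : ∀ q ∈ R.QYs, DerG Rules n (Fm.applyσ σ q.1 ::ₘ (R.inst σ + Γ)) Δ) :
      DerG Rules (n + 1) (R.inst σ + Γ) Δ

/-- Γ⇒Δ is derivable in G + Rules. -/
def Derivable (Rules : Set GeomRule) (Γ Δ : Multiset Fm) : Prop :=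
  ∃ n, DerG Rules n Γ Δ

/-- C is a split-interpolant of the partition Γ₁;Γ₂⇒Δ₁;Δ₂ in G + Rules. -/
def SplitInterpolant (Rules : Set GeomRule) (Γ₁ Γ₂ Δ₁ Δ₂ : Multiset Fm) (C : Fm) : Prop :=
  Derivable Rules Γ₁ (C ::ₘ Δ₁) ∧ Derivable Rules (C ::ₘ Γ₂) Δ₂ ∧
  C.lang ⊆ langM (Γ₁ + Δ₁) ∩ langM (Γ₂ + Δ₂)
/-- Disjunction C₁ ∨ … ∨ Cₘ of a list of formulas. -/
def disj : List Fm → Fm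
  | [] => Fm.bot
  | [C] => C
  | C :: L => Fm.or C (disj L)

/-- Conjunction C₁ ∧ … ∧ Cₘ of a list of formulas. -/
def conj : List Fm → Fm
  | [] => Fm.top
  | [C] => C
  | C :: L => Fm.and C (conj L)

/-- A[z̄/t̄]: successively substitute the variable zᵢ for the term tᵢ. -/
def Fm.substPairs : Fm → List (Tm × ℕ) → Fm
  | A, [] => A
  | A, (t, z) :: L => (A.subst t (Tm.var z)).substPairs L

/-- ∀z̄ A. -/
def foralls (zs : List ℕ) (A : Fm) : Fm := zs.foldr Fm.all A

/-- ∃z̄ A. -/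
def exs (zs : List ℕ) (A : Fm) : Fm := zs.foldr Fm.ex A

namespace HC

def bv : Fm → Finset ℕ
  | .and A B => bv A ∪ bv B
  | .or A B => bv A ∪ bv B
  | .imp A B => bv A ∪ bv B
  | .all x A => insert x (bv A)
  | .ex x A => insert x (bv A)
  | _ => ∅

theorem bv_subst (A : Fm) (u t : Tm) : bv (A.subst u t) = bv A := by
  induction A with
  | all x A ih => simp only [Fm.subst]; split_ifs <;> simp [bv, ih]
  | ex x A ih => simp only [Fm.subst]; split_ifs <;> simp [bv, ih]
  | _ => simp_all [Fm.subst, bv]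

theorem subst_id (A : Fm) (u : Tm) : A.subst u u = A := by
  have h : ∀ s : Tm, s.subst u u = s := by intro s; simp only [Tm.subst]; split_ifs <;> simp_all
  induction A with
  | all x A ih => simp only [Fm.subst]; split_ifs <;> simp [ih]
  | ex x A ih => simp only [Fm.subst]; split_ifs <;> simp [ih]
  | _ => simp_all [Fm.subst]

theorem tsubst_ne {s u : Tm} (t : Tm) (h : s ≠ u) : s.subst u t = s := by simp [Tm.subst, h]

theorem subst_notin {A : Fm} {u t : Tm} (h : u ∉ A.ter) : A.subst u t = A := by
  induction A with
  | rel r ts =>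
    simp only [Fm.subst, Fm.rel.injEq, true_and]
    simp only [Fm.ter, List.mem_toFinset] at h
    conv_rhs => rw [← List.map_id ts]
    apply List.map_congr_left
    intro s hs
    exact tsubst_ne t (by rintro rfl; exact h hs)
  | eq a b =>
    simp only [Fm.ter, Finset.mem_insert, Finset.mem_singleton, not_or] at h
    simp [Fm.subst, tsubst_ne t (Ne.symm h.1), tsubst_ne t (Ne.symm h.2)]
  | all x A ih => simp only [Fm.subst]; split_ifs <;> simp_all [Fm.ter]
  | ex x A ih => simp only [Fm.subst]; split_ifs <;> simp_all [Fm.ter]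
  | _ => simp_all [Fm.subst, Fm.ter]

theorem notin_subst {A : Fm} {u t x : Tm} (h : x ∉ A.ter) (hx : x ≠ t) :
    x ∉ (A.subst u t).ter := by
  have ht : ∀ s : Tm, x ≠ s → x ≠ s.subst u t := by
    intro s; simp only [Tm.subst]; split_ifs <;> simp_all
  induction A with
  | rel r ts =>
    simp only [Fm.subst, Fm.ter, List.mem_toFinset, List.mem_map, not_exists, not_and] at h ⊢
    intro s hs e
    exact ht s (by rintro rfl; exact h hs) e.symm
  | eq a b =>
    simp only [Fm.subst, Fm.ter, Finset.mem_insert, Finset.mem_singleton, not_or] at h ⊢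
    exact ⟨ht _ h.1, ht _ h.2⟩
  | all z A ih =>
    simp only [Fm.subst]; split_ifs
    · exact h
    · simp only [Fm.ter, Finset.mem_erase, not_and] at h ⊢
      exact fun e => ih (h e)
  | ex z A ih =>
    simp only [Fm.subst]; split_ifs
    · exact h
    · simp only [Fm.ter, Finset.mem_erase, not_and] at h ⊢
      exact fun e => ih (h e)
  | _ => simp_all [Fm.subst, Fm.ter]

theorem freeFor_notin {A : Fm} {t u : Tm} (h : u ∉ A.ter) : A.freeFor t u := by
  induction A with
  | all z A ih => exact Or.inl h
  | ex z A ih => exact Or.inl h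
  | _ => simp_all [Fm.freeFor, Fm.ter]

theorem freeFor_nb {A : Fm} {v : ℕ} {u : Tm} (h : v ∉ bv A) : A.freeFor (.var v) u := by
  induction A with
  | _ => simp_all [Fm.freeFor, bv]

theorem freeFor_all {A : Fm} {z : ℕ} {t u : Tm} (h : (Fm.all z A).freeFor t u)
    (hz : u ≠ .var z) : A.freeFor t u := by
  rcases h with h | h
  · apply freeFor_notin
    simpa [Fm.ter, hz] using h
  · exact h.2

theorem freeFor_ex {A : Fm} {z : ℕ} {t u : Tm} (h : (Fm.ex z A).freeFor t u)
    (hz : u ≠ .var z) : A.freeFor t u := by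
  rcases h with h | h
  · apply freeFor_notin
    simpa [Fm.ter, hz] using h
  · exact h.2

theorem freeFor_subst {A : Fm} {s : Tm} {x y v : ℕ} (h : A.freeFor s (.var x))
    (hv : v ∉ bv A) (hvx : v ≠ x) :
    (A.subst (.var y) (.var v)).freeFor (s.subst (.var y) (.var v)) (.var x) := by
  by_cases hs : s = .var y
  · simp only [hs, Tm.subst, if_true]
    exact freeFor_nb (by rwa [bv_subst])
  rw [tsubst_ne _ hs]
  have hne : Tm.var x ≠ Tm.var v := by simpa using Ne.symm hvx
  induction A with
  | all z A ih =>
    simp only [bv, Finset.mem_insert, not_or] at hv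
    rcases h with h | h
    · exact freeFor_notin (notin_subst h hne)
    · simp only [Fm.subst]; split_ifs
      · exact Or.inr h
      · exact Or.inr ⟨h.1, ih h.2 hv.2⟩
  | ex z A ih =>
    simp only [bv, Finset.mem_insert, not_or] at hv
    rcases h with h | h
    · exact freeFor_notin (notin_subst h hne)
    · simp only [Fm.subst]; split_ifs
      · exact Or.inr h
      · exact Or.inr ⟨h.1, ih h.2 hv.2⟩
  | _ => simp_all [Fm.freeFor, Fm.subst, bv]

theorem subst_comm {A : Fm} {s : Tm} {x y v : ℕ} (h : A.freeFor s (.var x))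
    (hyx : y ≠ x) (hvx : v ≠ x) :
    (A.subst (.var x) s).subst (.var y) (.var v) =
    (A.subst (.var y) (.var v)).subst (.var x) (s.subst (.var y) (.var v)) := by
  have ht : ∀ r : Tm, (r.subst (.var x) s).subst (.var y) (.var v) =
      (r.subst (.var y) (.var v)).subst (.var x) (s.subst (.var y) (.var v)) := by
    intro r
    simp only [Tm.subst]; grind
  induction A with
  | rel r ts => simp [Fm.subst, ht]
  | eq a b => simp [Fm.subst, ht]
  | all z A ih =>
    by_cases hzx : z = x
    · subst hzx; simp [Fm.subst, hyx]
    by_cases hzy : z = y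
    · subst hzy
      have hzx' : ¬ x = z := fun e => hzx e.symm
      simp only [Fm.subst, Tm.var.injEq, hzx', if_false, if_true, Fm.all.injEq, true_and]
      rcases h with h | h
      · simp [Fm.ter, hzx'] at h
        rw [subst_notin h, subst_notin h]
      · rw [tsubst_ne _ h.1]
    · have := ih (freeFor_all h (by simpa using Ne.symm hzx))
      simp [Fm.subst, Ne.symm hzx, Ne.symm hzy, this]
  | ex z A ih =>
    by_cases hzx : z = x
    · subst hzx; simp [Fm.subst, hyx]
    by_cases hzy : z = y
    · subst hzy
      have hzx' : ¬ x = z := fun e => hzx e.symm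
      simp only [Fm.subst, Tm.var.injEq, hzx', if_false, if_true, Fm.ex.injEq, true_and]
      rcases h with h | h
      · simp [Fm.ter, hzx'] at h
        rw [subst_notin h, subst_notin h]
      · rw [tsubst_ne _ h.1]
    · have := ih (freeFor_ex h (by simpa using Ne.symm hzx))
      simp [Fm.subst, Ne.symm hzx, Ne.symm hzy, this]
  | _ => simp_all [Fm.freeFor, Fm.subst]

theorem subst_same {A : Fm} {s : Tm} {x v : ℕ} (h : A.freeFor s (.var x)) :
    (A.subst (.var x) s).subst (.var x) (.var v) =
    A.subst (.var x) (s.subst (.var x) (.var v)) := by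
  have ht : ∀ r : Tm, (r.subst (.var x) s).subst (.var x) (.var v) =
      r.subst (.var x) (s.subst (.var x) (.var v)) := by
    intro r
    simp only [Tm.subst]; grind
  induction A with
  | rel r ts => simp [Fm.subst, ht]
  | eq a b => simp [Fm.subst, ht]
  | all z A ih =>
    by_cases hzx : x = z
    · subst hzx; simp [Fm.subst]
    · have := ih (freeFor_all h (by simpa using hzx))
      simp [Fm.subst, hzx, this]
  | ex z A ih =>
    by_cases hzx : x = z
    · subst hzx; simp [Fm.subst]
    · have := ih (freeFor_ex h (by simpa using hzx))
      simp [Fm.subst, hzx, this]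
  | _ => simp_all [Fm.freeFor, Fm.subst]

theorem subst_ren {A : Fm} {x w v : ℕ} (h : A.freeFor (.var w) (.var x))
    (hw : w = x ∨ Tm.var w ∉ A.ter) :
    (A.subst (.var x) (.var w)).subst (.var w) (.var v) = A.subst (.var x) (.var v) := by
  by_cases hwx : w = x
  · subst hwx; rw [subst_id]
  replace hw := hw.resolve_left hwx
  have hxw : ¬ x = w := fun e => hwx e.symm
  have ht : ∀ r : Tm, r ≠ .var w → (r.subst (.var x) (.var w)).subst (.var w) (.var v) =
      r.subst (.var x) (.var v) := by
    intro r
    simp only [Tm.subst]; grind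
  induction A with
  | rel r ts =>
    simp only [Fm.subst, List.map_map, Fm.rel.injEq, true_and]
    apply List.map_congr_left
    intro s hs
    apply ht
    rintro rfl
    simp [Fm.ter, hs] at hw
  | eq a b =>
    simp only [Fm.ter, Finset.mem_insert, Finset.mem_singleton, not_or] at hw
    simp [Fm.subst, ht _ (Ne.symm hw.1), ht _ (Ne.symm hw.2)]
  | all z A ih =>
    by_cases hzx : x = z
    · subst hzx
      have : (Fm.all x A).subst (.var x) (.var w) = Fm.all x A := by simp [Fm.subst]
      rw [this, subst_notin hw]; simp [Fm.subst]
    by_cases hzw : w = z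
    · subst hzw
      rcases h with h | h
      · rw [subst_notin h, subst_notin h, subst_notin hw]
      · exact absurd rfl h.1
    · have := ih (freeFor_all h (by simpa using hzx)) (by simpa [Fm.ter, hzw] using hw)
      simp [Fm.subst, hzx, hzw, this]
  | ex z A ih =>
    by_cases hzx : x = z
    · subst hzx
      have : (Fm.ex x A).subst (.var x) (.var w) = Fm.ex x A := by simp [Fm.subst]
      rw [this, subst_notin hw]; simp [Fm.subst]
    by_cases hzw : w = z
    · subst hzw
      rcases h with h | h
      · rw [subst_notin h, subst_notin h, subst_notin hw]
      · exact absurd rfl h.1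
    · have := ih (freeFor_ex h (by simpa using hzx)) (by simpa [Fm.ter, hzw] using hw)
      simp [Fm.subst, hzx, hzw, this]
  | _ => simp_all [Fm.freeFor, Fm.subst, Fm.ter]

theorem quant_subst (A : Fm) (x y v : ℕ) (hv : v ∉ insert x (bv A)) :
    ∃ A', (Fm.all x A).subst (.var y) (.var v) = .all x A' ∧
      (Fm.ex x A).subst (.var y) (.var v) = .ex x A' ∧
      ∀ s : Tm, A.freeFor s (.var x) →
        (A.subst (.var x) s).subst (.var y) (.var v) =
          A'.subst (.var x) (s.subst (.var y) (.var v)) ∧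
        A'.freeFor (s.subst (.var y) (.var v)) (.var x) := by
  simp only [Finset.mem_insert, not_or] at hv
  by_cases hyx : y = x
  · subst hyx
    refine ⟨A, by simp [Fm.subst], by simp [Fm.subst], fun s hs => ⟨subst_same hs, ?_⟩⟩
    simp only [Tm.subst]; split_ifs
    · exact freeFor_nb hv.2
    · exact hs
  · exact ⟨A.subst (.var y) (.var v), by simp [Fm.subst, hyx], by simp [Fm.subst, hyx],
      fun s hs => ⟨subst_comm hs hyx hv.1, freeFor_subst hs hv.2 hv.1⟩⟩

abbrev SF := Bool × Fm

def sb (y v : ℕ) (p : SF) : SF := (p.1, p.2.subst (.var y) (.var v))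

def Fr (y : ℕ) (S : Multiset SF) : Prop := ∀ p ∈ S, Tm.var y ∉ p.2.ter
def NB (v : ℕ) (S : Multiset SF) : Prop := ∀ p ∈ S, v ∉ bv p.2

inductive Ru : SF → List (Multiset SF) → Option ℕ → Prop
  | andL (A B) : Ru (true, .and A B) [{(true, A), (true, B)}] none
  | andR (A B) : Ru (false, .and A B) [{(false, A)}, {(false, B)}] none
  | orL (A B) : Ru (true, .or A B) [{(true, A)}, {(true, B)}] none
  | orR (A B) : Ru (false, .or A B) [{(false, A), (false, B)}] none
  | impL (A B) : Ru (true, .imp A B) [{(false, A)}, {(true, B)}] none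
  | impR (A B) : Ru (false, .imp A B) [{(true, A), (false, B)}] none
  | allL (x A t) (h : A.freeFor t (.var x)) :
      Ru (true, .all x A) [{(true, .all x A), (true, A.subst (.var x) t)}] none
  | exR (x A t) (h : A.freeFor t (.var x)) :
      Ru (false, .ex x A) [{(false, .ex x A), (false, A.subst (.var x) t)}] none
  | allR (x A y) (h : A.freeFor (.var y) (.var x)) (hy : Tm.var y ∉ (Fm.all x A).ter) :
      Ru (false, .all x A) [{(false, A.subst (.var x) (.var y))}] (some y)
  | exL (x A y) (h : A.freeFor (.var y) (.var x)) (hy : Tm.var y ∉ (Fm.ex x A).ter) :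
      Ru (true, .ex x A) [{(true, A.subst (.var x) (.var y))}] (some y)

def Init (S : Multiset SF) : Prop :=
  (∃ P : Fm, P.isAtom ∧ (true, P) ∈ S ∧ (false, P) ∈ S) ∨ (true, Fm.bot) ∈ S ∨ (false, Fm.top) ∈ S

inductive D : ℕ → Multiset SF → Prop
  | init {n S} (h : Init S) : D n S
  | step {n c ps e S} (h : Ru c ps e) (he : ∀ y, e = some y → Fr y S)
      (hp : ∀ p ∈ ps, D n (p + S)) : D (n + 1) (c ::ₘ S)

theorem Ru_subst {c ps e y v} (h : Ru c ps e) (hv : v ∉ bv c.2)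
    (he : ∀ w, e = some w → w ≠ y ∧ w ≠ v) :
    Ru (sb y v c) (ps.map (Multiset.map (sb y v))) e := by
  cases h with
  | allL x A t h =>
    obtain ⟨A', h1, h2, h3⟩ := quant_subst A x y v hv
    have := Ru.allL x A' _ (h3 t h).2
    simpa [sb, h1, (h3 t h).1] using this
  | exR x A t h =>
    obtain ⟨A', h1, h2, h3⟩ := quant_subst A x y v hv
    have := Ru.exR x A' _ (h3 t h).2
    simpa [sb, h2, (h3 t h).1] using this
  | allR x A w h hy =>
    obtain ⟨A', h1, h2, h3⟩ := quant_subst A x y v hv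
    obtain ⟨e1, e2⟩ := he w rfl
    have h4 := h3 _ h
    rw [tsubst_ne _ (by simpa using e1)] at h4
    have := Ru.allR x A' _ h4.2 (by rw [← h1]; exact notin_subst hy (by simpa using e2))
    simpa [sb, h1, h4.1] using this
  | exL x A w h hy =>
    obtain ⟨A', h1, h2, h3⟩ := quant_subst A x y v hv
    obtain ⟨e1, e2⟩ := he w rfl
    have h4 := h3 _ h
    rw [tsubst_ne _ (by simpa using e1)] at h4
    have := Ru.exL x A' _ h4.2 (by rw [← h2]; exact notin_subst hy (by simpa using e2))
    simpa [sb, h2, h4.1] using this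
  | _ => simp [sb, Fm.subst]; constructor

theorem Ru_ren {c ps w v} (h : Ru c ps (some w)) (hv : v ∉ bv c.2) (hf : Tm.var v ∉ c.2.ter) :
    Ru c (ps.map (Multiset.map (sb w v))) (some v) := by
  cases h with
  | allR x A w h hy =>
    have e : w = x ∨ Tm.var w ∉ A.ter := by
      simp [Fm.ter] at hy; tauto
    simp only [bv, Finset.mem_insert, not_or] at hv
    have := Ru.allR x A v (freeFor_nb hv.2) hf
    simpa [sb, subst_ren h e] using this
  | exL x A w h hy =>
    have e : w = x ∨ Tm.var w ∉ A.ter := by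
      simp [Fm.ter] at hy; tauto
    simp only [bv, Finset.mem_insert, not_or] at hv
    have := Ru.exL x A v (freeFor_nb hv.2) hf
    simpa [sb, subst_ren h e] using this

theorem Ru_NB {c ps e v} (h : Ru c ps e) (hv : v ∉ bv c.2) : ∀ p ∈ ps, NB v p := by
  cases h <;> simp_all [NB, bv, bv_subst]

theorem Ru_nonatom {c ps e} (h : Ru c ps e) : ¬ c.2.isAtom := by
  cases h <;> simp [Fm.isAtom]

def Rep : SF → Prop
  | (true, .all _ _) => True
  | (false, .ex _ _) => True
  | _ => False

theorem Ru_rep {c ps e} (h : Ru c ps e) (hr : Rep c) : ∀ p ∈ ps, ∃ q, p = c ::ₘ q := by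
  cases h <;> simp [Rep] at hr ⊢ <;> exact ⟨_, rfl⟩

theorem Ru_det {c ps ps' e e'} (h : Ru c ps e) (h' : Ru c ps' e') (hr : ¬ Rep c)
    (hv : ∀ v, e = some v → v ∉ bv c.2) :
    (e = none ∧ e' = none ∧ ps = ps') ∨
    (∃ v w, e = some v ∧ e' = some w ∧ ps = ps'.map (Multiset.map (sb w v))) := by
  cases h with
  | allL => simp [Rep] at hr
  | exR => simp [Rep] at hr
  | allR x A v h hy =>
    cases h' with
    | allR x A w h' hy' =>
      right
      have e : w = x ∨ Tm.var w ∉ A.ter := by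
        simp [Fm.ter] at hy'; tauto
      exact ⟨v, w, rfl, rfl, by simp [sb, subst_ren h' e]⟩
  | exL x A v h hy =>
    cases h' with
    | exL x A w h' hy' =>
      right
      have e : w = x ∨ Tm.var w ∉ A.ter := by
        simp [Fm.ter] at hy'; tauto
      exact ⟨v, w, rfl, rfl, by simp [sb, subst_ren h' e]⟩
  | _ => cases h'; simp

theorem fresh_set (S : Multiset SF) : ∃ F : Finset ℕ, ∀ w ∉ F, Fr w S ∧ NB w S := by
  induction S using Multiset.induction with
  | empty => exact ⟨∅, by simp [Fr, NB]⟩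
  | cons p S ih =>
    obtain ⟨F, hF⟩ := ih
    refine ⟨F ∪ bv p.2 ∪ p.2.ter.preimage Tm.var (fun a _ b _ h => by simpa using h), ?_⟩
    intro w hw
    simp only [Finset.mem_union, not_or] at hw
    have := hF w hw.1.1
    simp only [Fr, NB, Multiset.mem_cons, forall_eq_or_imp]
    exact ⟨⟨fun hm => hw.2 (Finset.mem_preimage.2 hm), this.1⟩, ⟨hw.1.2, this.2⟩⟩

theorem map_fresh {w v : ℕ} {S : Multiset SF} (h : Fr w S) : S.map (sb w v) = S := by
  conv_rhs => rw [← Multiset.map_id S]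
  apply Multiset.map_congr rfl
  intro p hp
  simp [sb, subst_notin (h p hp)]

theorem Init_subst {S y v} (h : Init S) : Init (S.map (sb y v)) := by
  rcases h with ⟨P, hP, h1, h2⟩ | h | h
  · left
    refine ⟨P.subst (.var y) (.var v), ?_, Multiset.mem_map_of_mem (sb y v) h1,
      Multiset.mem_map_of_mem (sb y v) h2⟩
    cases P <;> simp_all [Fm.isAtom, Fm.subst]
  · exact Or.inr (Or.inl (Multiset.mem_map_of_mem (sb y v) h))
  · exact Or.inr (Or.inr (Multiset.mem_map_of_mem (sb y v) h))

theorem NB_cons {v p S} : NB v (p ::ₘ S) ↔ v ∉ bv p.2 ∧ NB v S := by simp [NB]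
theorem NB_add {v S T} : NB v (S + T) ↔ NB v S ∧ NB v T := by
  simp only [NB, Multiset.mem_add]; grind
theorem Fr_cons {v p S} : Fr v (p ::ₘ S) ↔ Tm.var v ∉ p.2.ter ∧ Fr v S := by simp [Fr]
theorem Fr_add {v S T} : Fr v (S + T) ↔ Fr v S ∧ Fr v T := by
  simp only [Fr, Multiset.mem_add]; grind

theorem Fr_subst {S w y v} (h : Fr w S) (hw : w ≠ v) : Fr w (S.map (sb y v)) := by
  intro p hp
  obtain ⟨q, hq, rfl⟩ := Multiset.mem_map.1 hp
  exact notin_subst (h q hq) (by simpa using hw)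

theorem NB_subst {S w y v} (h : NB w S) : NB w (S.map (sb y v)) := by
  intro p hp
  obtain ⟨q, hq, rfl⟩ := Multiset.mem_map.1 hp
  simpa [sb, bv_subst] using h q hq

theorem D_subst (n : ℕ) : ∀ (S : Multiset SF) (y v : ℕ), D n S → NB v S → D n (S.map (sb y v)) := by
  induction n with
  | zero =>
    intro S y v h _
    cases h with
    | init h => exact .init (Init_subst h)
  | succ n ih =>
    intro S y v h hv
    cases h with
    | init h => exact .init (Init_subst h)
    | @step _ c ps e S h he hp =>
    rw [NB_cons] at hv
    rw [Multiset.map_cons]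
    rcases e with _ | w
    · refine .step (Ru_subst (v := v) (y := y) h hv.1 (by simp)) (by simp) ?_
      intro p hp'
      obtain ⟨q, hq, rfl⟩ := List.mem_map.1 hp'
      rw [← Multiset.map_add]
      exact ih _ _ _ (hp q hq) (NB_add.2 ⟨Ru_NB h hv.1 q hq, hv.2⟩)
    · obtain ⟨F, hF⟩ := fresh_set (c ::ₘ S)
      obtain ⟨w', hw'⟩ := Finset.exists_notMem (insert y (insert v F))
      simp only [Finset.mem_insert, not_or] at hw'
      obtain ⟨hy, hv', hw'⟩ := hw'
      have ⟨f1, f2⟩ := hF w' hw'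
      rw [Fr_cons] at f1
      rw [NB_cons] at f2
      have h' := Ru_ren h f2.1 f1.1
      refine .step (Ru_subst (v := v) (y := y) h' hv.1 (by simp [*])) ?_ ?_
      · simp only [Option.some.injEq, forall_eq']
        exact Fr_subst f1.2 hv'
      · intro p hp'
        obtain ⟨q, hq, rfl⟩ := List.mem_map.1 hp'
        have hq' := Ru_NB h' hv.1 q hq
        obtain ⟨r, hr, rfl⟩ := List.mem_map.1 hq
        rw [← Multiset.map_add]
        refine ih _ _ _ ?_ (NB_add.2 ⟨hq', hv.2⟩)
        have := ih _ w w' (hp r hr) (NB_add.2 ⟨Ru_NB h f2.1 r hr, f2.2⟩)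
        rwa [Multiset.map_add, map_fresh (he w rfl)] at this

theorem D_cases {n S} (X : Finset ℕ) (h : D n S) : Init S ∨ ∃ k c ps e T, n = k + 1 ∧
    S = c ::ₘ T ∧ Ru c ps e ∧ (∀ y, e = some y → Fr y T ∧ y ∉ X) ∧ ∀ p ∈ ps, D k (p + T) := by
  cases h with
  | init h => exact Or.inl h
  | @step k c ps e S h he hp =>
  right
  rcases e with _ | w
  · exact ⟨k, c, ps, none, S, rfl, rfl, h, by simp, hp⟩
  · obtain ⟨F, hF⟩ := fresh_set (c ::ₘ S)
    obtain ⟨w', hw'⟩ := Finset.exists_notMem (X ∪ F)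
    simp only [Finset.mem_union, not_or] at hw'
    have ⟨f1, f2⟩ := hF w' hw'.2
    rw [Fr_cons] at f1
    rw [NB_cons] at f2
    refine ⟨k, c, _, _, S, rfl, rfl, Ru_ren h f2.1 f1.1, ?_, ?_⟩
    · simp only [Option.some.injEq, forall_eq']
      exact ⟨f1.2, hw'.1⟩
    · intro p hp'
      obtain ⟨r, hr, rfl⟩ := List.mem_map.1 hp'
      have := D_subst _ _ w w' (hp r hr) (NB_add.2 ⟨Ru_NB h f2.1 r hr, f2.2⟩)
      rwa [Multiset.map_add, map_fresh (he w rfl)] at this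

theorem D_mono {n S} (h : D n S) : D (n + 1) S := by
  induction h with
  | init h => exact .init h
  | step h he _ ih => exact .step h he ih

theorem Init_inv {c : SF} {p S : Multiset SF} (hc : ¬ c.2.isAtom) (h : Init (c ::ₘ S)) :
    Init (p + S) := by
  have key : ∀ b P, Fm.isAtom P → (b, P) ∈ c ::ₘ S → (b, P) ∈ p + S := by
    intro b P hP hm
    rcases Multiset.mem_cons.1 hm with rfl | hm
    · exact absurd hP hc
    · exact Multiset.mem_add.2 (Or.inr hm)
  rcases h with ⟨P, hP, h1, h2⟩ | h | h
  · exact Or.inl ⟨P, hP, key _ _ hP h1, key _ _ hP h2⟩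
  · exact Or.inr (Or.inl (key _ _ trivial h))
  · exact Or.inr (Or.inr (key _ _ trivial h))

theorem D_inv {c ps e} (h : Ru c ps e) (hr : ¬ Rep c) (hc : ∀ v, e = some v → v ∉ bv c.2)
    {p} (hp : p ∈ ps) (n : ℕ) :
    ∀ S, (∀ v, e = some v → NB v S) → D n (c ::ₘ S) → D n (p + S) := by
  induction n with
  | zero =>
    intro S hS hd
    cases hd with
    | init hi => exact .init (Init_inv (Ru_nonatom h) hi)
  | succ n ih =>
    intro S hS hd
    obtain ⟨F, hF⟩ := fresh_set p
    rcases D_cases F hd with hi | ⟨k, c', ps', e', T, hk, hE, h', he', hp'⟩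
    · exact .init (Init_inv (Ru_nonatom h) hi)
    obtain rfl : n = k := by omega
    rcases Multiset.cons_eq_cons.1 hE with ⟨rfl, rfl⟩ | ⟨_, U, rfl, rfl⟩
    · apply D_mono
      rcases Ru_det h h' hr hc with ⟨_, _, rfl⟩ | ⟨v, w, rfl, rfl, rfl⟩
      · exact hp' p hp
      · obtain ⟨r, hr, rfl⟩ := List.mem_map.1 hp
        have := D_subst _ _ w v (hp' r hr)
          (NB_add.2 ⟨Ru_NB h' (hc v rfl) r hr, hS v rfl⟩)
        rwa [Multiset.map_add, map_fresh (he' w rfl).1] at this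
    · rw [Multiset.add_cons]
      refine .step h' ?_ ?_
      · intro y hy
        have := he' y hy
        exact Fr_add.2 ⟨(hF y this.2).1, (Fr_cons.1 this.1).2⟩
      · intro q hq
        have h1 := hp' q hq
        rw [Multiset.add_cons] at h1
        have h2 := ih (q + U) (fun v hv => by
          have := NB_cons.1 (hS v hv)
          exact NB_add.2 ⟨Ru_NB h' this.1 q hq, this.2⟩) h1
        rwa [add_left_comm]

theorem D_contr_multi {n : ℕ} (h : ∀ c S, D n (c ::ₘ c ::ₘ S) → D n (c ::ₘ S))
    (p : Multiset SF) : ∀ S, D n (p + (p + S)) → D n (p + S) := by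
  induction p using Multiset.induction with
  | empty => intro S; simp
  | cons c p ih =>
    intro S hd
    have h1 : c ::ₘ p + (c ::ₘ p + S) = c ::ₘ c ::ₘ (p + (p + S)) := by simp
    rw [h1] at hd
    have h2 := h _ _ hd
    have h3 : c ::ₘ (p + (p + S)) = p + (p + c ::ₘ S) := by simp
    rw [h3] at h2
    have h4 := ih _ h2
    simpa using h4

theorem Init_contr {c : SF} {S : Multiset SF} (h : Init (c ::ₘ c ::ₘ S)) : Init (c ::ₘ S) := by
  simpa [Init] using h

theorem D_contr (n : ℕ) : ∀ c S, D n (c ::ₘ c ::ₘ S) → D n (c ::ₘ S) := by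
  induction n with
  | zero =>
    intro c S hd
    cases hd with
    | init hi => exact .init (Init_contr hi)
  | succ n ih =>
    intro c S hd
    obtain ⟨F, hF⟩ := fresh_set (c ::ₘ S)
    rcases D_cases F hd with hi | ⟨k, c', ps, e, T, hk, hE, h, he, hp⟩
    · exact .init (Init_contr hi)
    obtain rfl : n = k := by omega
    by_cases hcc : c = c'
    · subst hcc
      obtain rfl : c ::ₘ S = T := by simpa using hE
      refine .step h (fun y hy => (Fr_cons.1 (he y hy).1).2) ?_
      intro p hpp
      have h1 := hp p hpp
      by_cases hr : Rep c
      · obtain ⟨q, rfl⟩ := Ru_rep h hr p hpp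
        have h2 : c ::ₘ q + c ::ₘ S = c ::ₘ c ::ₘ (q + S) := by simp
        rw [h2] at h1
        simpa using ih _ _ h1
      · rw [Multiset.add_cons] at h1
        have hb : ∀ v, e = some v → v ∉ bv c.2 ∧ NB v S :=
          fun v hv => NB_cons.1 (hF v (he v hv).2).2
        have h2 := D_inv h hr (fun v hv => (hb v hv).1) hpp n (p + S)
          (fun v hv => NB_add.2 ⟨Ru_NB h (hb v hv).1 p hpp, (hb v hv).2⟩) h1
        exact D_contr_multi ih p S h2
    · have hm : c' ∈ c ::ₘ c ::ₘ S := by rw [hE]; simp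
      have hm' : c' ∈ S := by
        simpa [Ne.symm hcc] using hm
      obtain ⟨U, rfl⟩ := Multiset.exists_cons_of_mem hm'
      obtain rfl : c ::ₘ c ::ₘ U = T := by
        have : c ::ₘ c ::ₘ c' ::ₘ U = c' ::ₘ c ::ₘ c ::ₘ U := by
          rw [Multiset.cons_swap c c', Multiset.cons_swap c c']
        rw [this] at hE
        simpa using hE
      rw [Multiset.cons_swap]
      refine .step h (fun y hy => (Fr_cons.1 (he y hy).1).2) ?_
      intro p hpp
      have h1 := hp p hpp
      rw [Multiset.add_cons, Multiset.add_cons] at h1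
      rw [Multiset.add_cons]
      exact ih _ _ h1

def mk (Γ Δ : Multiset Fm) : Multiset SF := Γ.map (Prod.mk true) + Δ.map (Prod.mk false)

def lf (S : Multiset SF) : Multiset Fm := (S.filter (fun p => p.1 = true)).map Prod.snd
def rt (S : Multiset SF) : Multiset Fm := (S.filter (fun p => p.1 = false)).map Prod.snd

theorem mk_consL (A Γ Δ) : mk (A ::ₘ Γ) Δ = (true, A) ::ₘ mk Γ Δ := by simp [mk]
theorem mk_consR (A Γ Δ) : mk Γ (A ::ₘ Δ) = (false, A) ::ₘ mk Γ Δ := by simp [mk]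

theorem lf_true (A S) : lf ((true, A) ::ₘ S) = A ::ₘ lf S := by simp [lf]
theorem lf_false (A S) : lf ((false, A) ::ₘ S) = lf S := by simp [lf]
theorem rt_true (A S) : rt ((true, A) ::ₘ S) = rt S := by simp [rt]
theorem rt_false (A S) : rt ((false, A) ::ₘ S) = A ::ₘ rt S := by simp [rt]

theorem lf_mk (Γ Δ) : lf (mk Γ Δ) = Γ := by
  induction Δ using Multiset.induction with
  | cons A Δ ih => rw [mk_consR, lf_false, ih]
  | empty =>
    induction Γ using Multiset.induction with
    | cons A Γ ih => rw [mk_consL, lf_true, ih]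
    | empty => simp [mk, lf]

theorem rt_mk (Γ Δ) : rt (mk Γ Δ) = Δ := by
  induction Δ using Multiset.induction with
  | cons A Δ ih => rw [mk_consR, rt_false, ih]
  | empty =>
    induction Γ using Multiset.induction with
    | cons A Γ ih => rw [mk_consL, rt_true, ih]
    | empty => simp [mk, rt]

theorem mem_terM (t : Tm) (Γ : Multiset Fm) : t ∈ terM Γ ↔ ∃ A ∈ Γ, t ∈ A.ter := by
  induction Γ using Multiset.induction with
  | empty => simp [terM]
  | cons A Γ ih =>
    have : terM (A ::ₘ Γ) = A.ter ∪ terM Γ := by simp [terM]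
    rw [this, Finset.mem_union, ih]; simp

theorem Fr_mk {y Γ Δ} (h : Tm.var y ∉ terM Γ ∪ terM Δ) : Fr y (mk Γ Δ) := by
  simp only [Finset.mem_union, mem_terM, not_or, not_exists, not_and] at h
  intro p hp
  simp only [mk, Multiset.mem_add, Multiset.mem_map] at hp
  rcases hp with ⟨A, hA, rfl⟩ | ⟨A, hA, rfl⟩
  · exact h.1 A hA
  · exact h.2 A hA

theorem Fr_lf_rt {y S} (h : Fr y S) : Tm.var y ∉ terM (lf S) ∪ terM (rt S) := by
  simp only [Finset.mem_union, mem_terM, not_or, not_exists, not_and]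
  constructor
  · intro A hA
    simp only [lf, Multiset.mem_map, Multiset.mem_filter] at hA
    obtain ⟨p, hp, rfl⟩ := hA
    exact h p hp.1
  · intro A hA
    simp only [rt, Multiset.mem_map, Multiset.mem_filter] at hA
    obtain ⟨p, hp, rfl⟩ := hA
    exact h p hp.1

theorem to_D {n Γ Δ} (h : DerG ∅ n Γ Δ) : D n (mk Γ Δ) := by
  induction h with
  | @ax n P Γ Δ h => exact .init (Or.inl ⟨P, h, by simp [mk], by simp [mk]⟩)
  | botL => exact .init (Or.inr (Or.inl (by simp [mk])))
  | topR => exact .init (Or.inr (Or.inr (by simp [mk])))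
  | andL _ ih =>
    simp only [mk_consL, mk_consR] at ih ⊢
    exact .step (.andL _ _) (by simp) (by simpa using ih)
  | andR _ _ ih ih' =>
    simp only [mk_consL, mk_consR] at ih ih' ⊢
    exact .step (.andR _ _) (by simp) (by simpa using ⟨ih, ih'⟩)
  | orL _ _ ih ih' =>
    simp only [mk_consL, mk_consR] at ih ih' ⊢
    exact .step (.orL _ _) (by simp) (by simpa using ⟨ih, ih'⟩)
  | orR _ ih =>
    simp only [mk_consL, mk_consR] at ih ⊢
    exact .step (.orR _ _) (by simp) (by simpa using ih)
  | impL _ _ ih ih' =>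
    simp only [mk_consL, mk_consR] at ih ih' ⊢
    exact .step (.impL _ _) (by simp) (by simpa using ⟨ih, ih'⟩)
  | impR _ ih =>
    simp only [mk_consL, mk_consR] at ih ⊢
    rw [Multiset.cons_swap] at ih
    exact .step (.impR _ _) (by simp) (by simpa using ih)
  | allL hf _ ih =>
    simp only [mk_consL, mk_consR] at ih ⊢
    rw [Multiset.cons_swap] at ih
    exact .step (.allL _ _ _ hf) (by simp) (by simpa using ih)
  | exR hf _ ih =>
    simp only [mk_consL, mk_consR] at ih ⊢
    exact .step (.exR _ _ _ hf) (by simp) (by simpa using ih)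
  | allR hf hy _ ih =>
    rw [Finset.mem_union, not_or] at hy
    simp only [mk_consL, mk_consR] at ih ⊢
    exact .step (.allR _ _ _ hf hy.2) (by simpa using Fr_mk hy.1) (by simpa using ih)
  | exL hf hy _ ih =>
    rw [Finset.mem_union, not_or] at hy
    simp only [mk_consL, mk_consR] at ih ⊢
    exact .step (.exL _ _ _ hf hy.2) (by simpa using Fr_mk hy.1) (by simpa using ih)
  | geom hR => exact absurd hR (by simp)

theorem of_D {n S} (h : D n S) : DerG ∅ n (lf S) (rt S) := by
  induction h with
  | init h =>
    have mt : ∀ {A : Fm} {S : Multiset SF}, (true, A) ∈ S → ∃ Γ, lf S = A ::ₘ Γ := by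
      intro A S h
      obtain ⟨T, rfl⟩ := Multiset.exists_cons_of_mem h
      exact ⟨_, lf_true _ _⟩
    have mf : ∀ {A : Fm} {S : Multiset SF}, (false, A) ∈ S → ∃ Γ, rt S = A ::ₘ Γ := by
      intro A S h
      obtain ⟨T, rfl⟩ := Multiset.exists_cons_of_mem h
      exact ⟨_, rt_false _ _⟩
    rcases h with ⟨P, hP, h1, h2⟩ | h | h
    · obtain ⟨_, e1⟩ := mt h1
      obtain ⟨_, e2⟩ := mf h2
      rw [e1, e2]; exact .ax hP
    · obtain ⟨_, e1⟩ := mt h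
      rw [e1]; exact .botL
    · obtain ⟨_, e1⟩ := mf h
      rw [e1]; exact .topR
  | step h he _ ih =>
    cases h <;>
      simp only [List.mem_cons, List.not_mem_nil, or_false, forall_eq_or_imp, forall_eq,
        Multiset.insert_eq_cons, Multiset.cons_add, Multiset.singleton_add,
        lf_true, lf_false, rt_true, rt_false] at ih ⊢
    case andL => exact .andL ih
    case andR => exact .andR ih.1 ih.2
    case orL => exact .orL ih.1 ih.2
    case orR => exact .orR ih
    case impL => exact .impL ih.1 ih.2
    case impR => exact .impR ih
    case allL h _ =>
      rw [Multiset.cons_swap] at ih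
      exact .allL h ih
    case exR h _ => exact .exR h ih
    case allR h hy _ =>
      exact .allR h (by rw [Finset.mem_union, not_or]; exact ⟨Fr_lf_rt (he _ rfl), hy⟩) ih
    case exL h hy _ =>
      exact .exL h (by rw [Finset.mem_union, not_or]; exact ⟨Fr_lf_rt (he _ rfl), hy⟩) ih

end HC

/-- Height-preserving contraction in G: if A,A,Γ⇒Δ has a
derivation in G of height at most n then so does A,Γ⇒Δ; and if Γ⇒Δ,A,A has a
derivation in G of height at most n then so does Γ⇒Δ,A. -/
theorem heightPreservingContraction_G (n : ℕ) (A : Fm) (Γ Δ : Multiset Fm) :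
    (DerG ∅ n (A ::ₘ A ::ₘ Γ) Δ → DerG ∅ n (A ::ₘ Γ) Δ) ∧
    (DerG ∅ n Γ (A ::ₘ A ::ₘ Δ) → DerG ∅ n Γ (A ::ₘ Δ)) := by
  constructor
  · intro h
    have h1 := HC.to_D h
    rw [HC.mk_consL, HC.mk_consL] at h1
    have h2 := HC.of_D (HC.D_contr _ _ _ h1)
    rwa [← HC.mk_consL, HC.lf_mk, HC.rt_mk] at h2
  · intro h
    have h1 := HC.to_D h
    rw [HC.mk_consR, HC.mk_consR] at h1
    have h2 := HC.of_D (HC.D_contr _ _ _ h1)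
    rwa [← HC.mk_consR, HC.lf_mk, HC.rt_mk] at h2
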